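/- Let A be a forest of finite rooted trees, k ≥ 1 an integer, and R a forest of finite rooted trees with R^k = A. If some depth level d of A contains β ≥ 2 vertices, then β = s^k for some integer s ≥ 2; in particular 2^k ≤ β, and hence k ≤ ⌊log₂ m⌋ where m is the total number of vertices of A. -/

import Mathlib

noncomputable section

/-- A rooted tree (finite or infinite), presented by its levels: `level n` is the
set of vertices of depth `n` (finitely many at each depth), every vertex of depth
`n+1` has a parent of depth `n` (edges are directed towards the root), and there
is a unique vertex of depth `0`, the root. -/
structure RTree : Type 1 where
  level : ℕ → Type
  parent : ∀ n, level (n + 1) → level n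
  fin : ∀ n, Fintype (level n)
  root : level 0
  root_unique : ∀ x : level 0, x = root

namespace RTree

/-- Isomorphism of rooted trees: a depth-preserving bijection of the vertices
commuting with the parent maps (hence root- and edge-preserving). -/
def Iso (t s : RTree) : Prop :=
  ∃ e : ∀ n, t.level n ≃ s.level n,
    ∀ (n : ℕ) (x : t.level (n + 1)), e n (t.parent n x) = s.parent n (e (n + 1) x)

/-- The (layer-by-layer direct) product of two rooted trees. -/
def tprod (t s : RTree) : RTree where
  level n := t.level n × s.level n
  parent n x := (t.parent n x.1, s.parent n x.2)
  fin n := by haveI := t.fin n; haveI := s.fin n; infer_instance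
  root := (t.root, s.root)
  root_unique x := by
    obtain ⟨a, b⟩ := x
    rw [t.root_unique a, s.root_unique b]

/-- The cut of a tree at depth `n`: the subtree induced on vertices of depth `≤ n`. -/
def tcut (t : RTree) (n : ℕ) : RTree where
  level k := PLift (k ≤ n) × t.level k
  parent k x := (⟨Nat.le_of_succ_le x.1.down⟩, t.parent k x.2)
  fin k := by
    haveI := t.fin k
    haveI : Finite (PLift (k ≤ n)) := Finite.of_subsingleton
    exact Fintype.ofFinite _
  root := (⟨Nat.zero_le n⟩, t.root)
  root_unique x := by
    obtain ⟨a, b⟩ := x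
    rw [t.root_unique b]

/-- A tree is finite when it has no vertices below some depth. -/
def IsFinite (t : RTree) : Prop := ∃ N, ∀ k, N ≤ k → IsEmpty (t.level k)

/-- The depth of a (finite) tree: the largest depth of one of its vertices. -/
def depth (t : RTree) : ℕ := sSup {n | Nonempty (t.level n)}

/-- `tpow t k` is the `k`-fold product `t^k` of the tree `t` with itself (for `k ≥ 1`). -/
def tpow (t : RTree) : ℕ → RTree
  | 0 => t
  | 1 => t
  | n + 2 => tprod t (tpow t (n + 1))

/-- Iterated parent map, sending a vertex of depth `k+1` to its ancestor of depth 1. -/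
def down (t : RTree) : ∀ k, t.level (k + 1) → t.level 1
  | 0, x => x
  | k + 1, x => t.down k (t.parent (k + 1) x)

/-- The subtree of `t` rooted at the depth-1 vertex `v` (a child of the root). -/
def subtreeAt (t : RTree) (v : t.level 1) : RTree where
  level k := { x : t.level (k + 1) // t.down k x = v }
  parent k x := ⟨t.parent (k + 1) x.1, x.2⟩
  fin k := by haveI := t.fin (k + 1); exact Fintype.ofFinite _
  root := ⟨v, rfl⟩
  root_unique x := Subtype.ext x.2

/-- `D t`: the forest (here, a list) of the subtrees of `t` rooted at the
children of the root. -/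
def D (t : RTree) : List RTree := (@Finset.univ _ (t.fin 1)).toList.map t.subtreeAt

end RTree

/-- A forest is a finite multiset of rooted trees; we represent it by a list of
(concrete) trees, equality of forests being `ForestEq` below. -/
abbrev Forest := List RTree

/-- Equality of forests as multisets of isomorphism classes of rooted trees. -/
def ForestEq (F G : Forest) : Prop := Multiset.Rel RTree.Iso (↑F) (↑G)

/-- `F` is a sub-multiset of `G` up to isomorphism of rooted trees. -/
def ForestLe (F G : Forest) : Prop :=
  ∃ H : Multiset RTree, H ≤ (↑G : Multiset RTree) ∧ Multiset.Rel RTree.Iso (↑F) H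

/-- The product of two forests: the multiset of pairwise products. -/
def fprod (F G : Forest) : Forest := (F.map fun t => G.map fun s => t.tprod s).flatten

/-- The cut of a forest at depth `n`. -/
def fcut (F : Forest) (n : ℕ) : Forest := F.map (RTree.tcut · n)

/-- The depth of a forest: maximum of the depths of its trees. -/
def fdepth (F : Forest) : ℕ := (F.map RTree.depth).foldr max 0

/-- `fpow F k` is the `k`-fold product `F^k` of the forest `F` with itself (for `k ≥ 1`). -/
def fpow (F : Forest) : ℕ → Forest
  | 0 => F
  | 1 => F
  | n + 2 => fprod F (fpow F (n + 1))

/-- `D` of a forest: the multiset union of the `D` of its trees. -/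
def fD (F : Forest) : Forest := (F.map RTree.D).flatten

/-- `R F`: the rooted tree obtained by attaching each tree of the forest `F`
as a child subtree of a new common root, so that `D (R F) = F`. -/
def rollRoot (F : Forest) : RTree where
  level k :=
    match k with
    | 0 => PUnit
    | k + 1 => Σ i : Fin F.length, (F.get i).level k
  parent k :=
    match k with
    | 0 => fun _ => PUnit.unit
    | k + 1 => fun x => ⟨x.1, (F.get x.1).parent k x.2⟩
  fin k := by
    match k with
    | 0 => exact inferInstanceAs (Fintype PUnit)
    | k + 1 =>
      haveI : ∀ i : Fin F.length, Fintype ((F.get i).level k) := fun i => (F.get i).fin k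
      exact inferInstanceAs (Fintype (Σ i : Fin F.length, (F.get i).level k))
  root := PUnit.unit
  root_unique _ := rfl

/-- The number of vertices of depth `d` in a forest. -/
def levelCard (F : Forest) (d : ℕ) : ℕ := (F.map fun t => @Fintype.card _ (t.fin d)).sum

/-- The total number of vertices of a (finite) forest. -/
def totalCard (F : Forest) : ℕ := ∑ d ∈ Finset.range (fdepth F + 1), levelCard F d

/-- A finite discrete-time dynamical system: a finite set of states together
with a transition function. -/
structure FDDS : Type 1 where
  S : Type
  fin : Fintype S
  f : S → S

namespace FDDS

/-- A state is periodic when some positive iterate of the transition function fixes it. -/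
def Periodic (A : FDDS) (u : A.S) : Prop := ∃ p, 1 ≤ p ∧ A.f^[p] u = u

/-- The least `k` such that `f^[k] s` is periodic. -/
def depthOf (A : FDDS) (s : A.S) : ℕ := sInf {k | A.Periodic (A.f^[k] s)}

/-- The depth of an FDDS: the maximum over states `s` of the least `k` such
that `f^[k] s` is periodic. -/
def depth (A : FDDS) : ℕ := sSup {d | ∃ s : A.S, d = A.depthOf s}

/-- The functional digraph of `A` has a single (weakly) connected component. -/
def Connected (A : FDDS) : Prop := ∀ s s' : A.S, ∃ k l, A.f^[k] s = A.f^[l] s'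

/-- The unroll tree of `A` in the state `u`: vertices of depth `k` are the
`k`-th preimages of `u`, the parent of `(v,k+1)` being `(f v, k)`. -/
def unrollTree (A : FDDS) (u : A.S) : RTree where
  level k := { s : A.S // A.f^[k] s = u }
  parent k x := ⟨A.f x.1, by rw [← Function.iterate_succ_apply]; exact x.2⟩
  fin k := by haveI := A.fin; exact Fintype.ofFinite _
  root := ⟨u, rfl⟩
  root_unique x := Subtype.ext x.2

/-- The unroll of `A`: the multiset of the unroll trees of `A` in its periodic states. -/
def unroll (A : FDDS) : Forest :=
  haveI := A.fin
  letI : DecidablePred A.Periodic := Classical.decPred _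
  (Finset.univ.filter A.Periodic).toList.map A.unrollTree

/-- The minimal period of a periodic state. -/
def minPeriod (A : FDDS) (u : A.S) : ℕ := sInf {p | 1 ≤ p ∧ A.f^[p] u = u}

/-- The periodic state `w` with `f^[i] w = u`: the `i`-th "shift" of `u`
backwards along its cycle. -/
def shiftState (A : FDDS) (u : A.S) (i : ℕ) : A.S := A.f^[i * (A.minPeriod u - 1)] u

/-- The shift `σ^i(t)` of the unroll tree `t = unrollTree A u`: the unroll tree
rooted at the depth-`i` vertex of the infinite branch of `t`. -/
def shiftTree (A : FDDS) (u : A.S) (i : ℕ) : RTree := A.unrollTree (A.shiftState u i)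

/-- The unroll tree of `A` in `u` admits a periodic pattern of size `p ≥ 1`,
i.e. `σ^p(t_u) = t_u`. -/
def PatternSize (A : FDDS) (u : A.S) (p : ℕ) : Prop :=
  1 ≤ p ∧ RTree.Iso (A.shiftTree u p) (A.unrollTree u)

/-- `|Shift(t_u)|`: the smallest size of a periodic pattern of the unroll tree of `A` in `u`. -/
def shiftCount (A : FDDS) (u : A.S) : ℕ := sInf {p | A.PatternSize u p}

end FDDS

/-- A rooted tree is an unroll tree when it is isomorphic to the unroll tree of
some FDDS in one of its periodic states. -/
def IsUnrollTree (x : RTree) : Prop :=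
  ∃ (A : FDDS) (u : A.S), A.Periodic u ∧ RTree.Iso x (A.unrollTree u)

end

/-!
The number of vertices of a given depth is invariant under isomorphism of forests and
multiplicative for the product, so it turns `R ^ k = A` into `β = s ^ k`, where `s` counts the
vertices of `R` of depth `d`. As `β ≥ 2` forces `s ≥ 2`, the bound `2 ^ k ≤ s ^ k = β ≤ m` follows.
-/

section LevelCard

attribute [local instance] RTree.fin

namespace RTree

variable {t s : RTree}

theorem Iso.card_level_eq (h : t.Iso s) (d : ℕ) :
    Fintype.card (t.level d) = Fintype.card (s.level d) :=
  let ⟨e, _⟩ := h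
  Fintype.card_congr (e d)

theorem card_level_tprod (t s : RTree) (d : ℕ) :
    Fintype.card ((t.tprod s).level d) = Fintype.card (t.level d) * Fintype.card (s.level d) :=
  Fintype.card_prod _ _

theorem IsFinite.bddAbove_nonempty_level (h : t.IsFinite) :
    BddAbove {n | Nonempty (t.level n)} := by
  obtain ⟨N, hN⟩ := h
  refine ⟨N, fun n hn => ?_⟩
  by_contra! hlt
  exact not_isEmpty_iff.2 hn (hN n hlt.le)

theorem IsFinite.isEmpty_level_of_depth_lt (h : t.IsFinite) {d : ℕ} (hd : t.depth < d) :
    IsEmpty (t.level d) := by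
  by_contra hne
  exact hd.not_ge (le_csSup h.bddAbove_nonempty_level (not_isEmpty_iff.1 hne))

theorem depth_le_fdepth {F : Forest} (ht : t ∈ F) : t.depth ≤ fdepth F :=
  List.le_max_of_le' 0 (List.mem_map_of_mem ht) le_rfl

end RTree

theorem ForestEq.levelCard_eq {F G : Forest} (h : ForestEq F G) (d : ℕ) :
    levelCard F d = levelCard G d := by
  have hcards : (F : Multiset RTree).map (fun t => Fintype.card (t.level d)) =
      (G : Multiset RTree).map (fun t => Fintype.card (t.level d)) :=
    Multiset.rel_eq.1 <| Multiset.rel_map.2 <|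
      Multiset.Rel.mono h fun _ _ _ _ hts => hts.card_level_eq d
  simpa only [levelCard, Multiset.map_coe, Multiset.sum_coe] using congrArg Multiset.sum hcards

theorem levelCard_map_tprod (t : RTree) (G : Forest) (d : ℕ) :
    levelCard (G.map t.tprod) d = Fintype.card (t.level d) * levelCard G d := by
  simp only [levelCard, List.map_map, Function.comp_def, RTree.card_level_tprod,
    List.sum_map_mul_left]

theorem levelCard_fprod (F G : Forest) (d : ℕ) :
    levelCard (fprod F G) d = levelCard F d * levelCard G d := by
  calc levelCard (fprod F G) d
      = (F.map fun t => levelCard (G.map t.tprod) d).sum := by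
        simp only [levelCard, fprod, List.map_flatten, List.sum_flatten, List.map_map,
          Function.comp_def]
    _ = levelCard F d * levelCard G d := by
        simp only [levelCard_map_tprod, List.sum_map_mul_right]
        rfl

theorem levelCard_fpow (F : Forest) (d : ℕ) :
    ∀ {k : ℕ}, k ≠ 0 → levelCard (fpow F k) d = levelCard F d ^ k
  | 0, hk => absurd rfl hk
  | 1, _ => by rw [fpow, pow_one]
  | n + 2, _ => by
    rw [fpow, levelCard_fprod, levelCard_fpow F d n.succ_ne_zero, ← pow_succ']

theorem levelCard_eq_zero_of_fdepth_lt {F : Forest} (hF : ∀ t ∈ F, t.IsFinite) {d : ℕ}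
    (hd : fdepth F < d) : levelCard F d = 0 := by
  refine List.sum_eq_zero (List.forall_mem_map.2 fun t ht => Fintype.card_eq_zero_iff.2 ?_)
  exact (hF t ht).isEmpty_level_of_depth_lt ((RTree.depth_le_fdepth ht).trans_lt hd)

theorem levelCard_le_totalCard {F : Forest} (hF : ∀ t ∈ F, t.IsFinite) (d : ℕ) :
    levelCard F d ≤ totalCard F := by
  rcases le_or_gt d (fdepth F) with hd | hd
  · exact Finset.single_le_sum (f := levelCard F) (fun _ _ => Nat.zero_le _)
      (Finset.mem_range_succ_iff.2 hd)
  · rw [levelCard_eq_zero_of_fdepth_lt hF hd]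
    exact Nat.zero_le _

end LevelCard

/-- Let `A` be a forest of finite rooted trees, `k ≥ 1`, and `R` a
forest of finite rooted trees with `R^k = A`. If some depth level `d` of `A` contains
`β ≥ 2` vertices, then `β = s^k` for some integer `s ≥ 2`; in particular `2^k ≤ β`,
and hence `k ≤ ⌊log₂ m⌋` where `m` is the total number of vertices of `A`. -/
theorem stmt11 (A R : Forest)
    (hA : ∀ t ∈ A, t.IsFinite) (hR : ∀ t ∈ R, t.IsFinite)
    (k : ℕ) (hk : 1 ≤ k) (h : ForestEq (fpow R k) A)
    (d β : ℕ) (hβ : levelCard A d = β) (hβ2 : 2 ≤ β)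
    (m : ℕ) (hm : m = totalCard A) :
    (∃ s, 2 ≤ s ∧ β = s ^ k) ∧ 2 ^ k ≤ β ∧ k ≤ Nat.log 2 m := by
  have hk0 : k ≠ 0 := Nat.one_le_iff_ne_zero.1 hk
  have hβs : β = levelCard R d ^ k := by
    rw [← hβ, ← h.levelCard_eq, levelCard_fpow R d hk0]
  have hs : 2 ≤ levelCard R d := (Nat.one_lt_pow_iff hk0).1 (hβs ▸ hβ2)
  have hkβ : 2 ^ k ≤ β := hβs ▸ Nat.pow_le_pow_left hs k
  have hβm : β ≤ m := hm ▸ hβ ▸ levelCard_le_totalCard hA d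
  exact ⟨⟨_, hs, hβs⟩, hkβ, Nat.le_log_of_pow_le one_lt_two (hkβ.trans hβm)⟩
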